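/- Let d,k ≥ 1 and let t' be the binary tree obtained from a binary tree t by performing a left or right k-rotation at a node v of t. Then ld(t) ~_k^d ld(t') if and only if the left depth of v in t is at least d−1. -/

import Mathlib

/-- Full binary trees (every internal node has exactly two children). -/
inductive BTree : Type
  | leaf : BTree
  | node : BTree → BTree → BTree
deriving DecidableEq

namespace BTree

/-- Number of leaves of a full binary tree. -/
def numLeaves : BTree → ℕ
  | leaf => 1
  | node l r => l.numLeaves + r.numLeaves

/-- The list of pairs (left depth, right depth) of the leaves, in preorder. -/
def leafDepths : BTree → List (ℕ × ℕ)
  | leaf => [(0, 0)]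
  | node l r =>
      (l.leafDepths.map fun p => (p.1 + 1, p.2)) ++ (r.leafDepths.map fun p => (p.1, p.2 + 1))

/-- The left depth sequence `ld(t)` of the leaves of `t`, in preorder. -/
def ld (t : BTree) : List ℕ := t.leafDepths.map Prod.fst

/-- The right depth sequence `rd(t)` of the leaves of `t`, in preorder. -/
def rd (t : BTree) : List ℕ := t.leafDepths.map Prod.snd

end BTree

/-- `b ~^d c` : the sequences have equal length and agree at every position where
either entry is `< d`. -/
def DepthEq (d : ℕ) : List ℕ → List ℕ → Prop :=
  List.Forall₂ (fun a b => min a b < d → a = b)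

/-- `b ~_k c` : entrywise congruence mod `k` (and equal length). -/
def ModListEq (k : ℕ) : List ℕ → List ℕ → Prop :=
  List.Forall₂ (fun a b => a % k = b % k)

/-- The relation `t ~ t'` iff `ld(t) ~^d ld(t')` and `rd(t) ~^e rd(t')`. -/
def DeRel (d e : ℕ) (t t' : BTree) : Prop :=
  DepthEq d t.ld t'.ld ∧ DepthEq e t.rd t'.rd

/-- The relation `t ~ t'` iff `ld(t) ~_k^d ld(t')` (i.e. `ld(t) ~_k ld(t')` and
`ld(t) ~^d ld(t')`). -/
def DkRel (d k : ℕ) (t t' : BTree) : Prop :=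
  ModListEq k t.ld t'.ld ∧ DepthEq d t.ld t'.ld

/-- `T_n`: full binary trees with `n+1` leaves. -/
def Tn (n : ℕ) : Type := {t : BTree // t.numLeaves = n + 1}

/-- `C^{d,e}_n`: the number of equivalence classes of the relation `DeRel d e` on `T_n`. -/
noncomputable def Cde (d e n : ℕ) : ℕ :=
  Nat.card (Quot (fun t t' : Tn n => DeRel d e t.1 t'.1))

/-- `C^d_{k,n}`: the number of equivalence classes of `ld(t) ~_k^d ld(t')` on `T_n`. -/
noncomputable def Cdk (d k n : ℕ) : ℕ :=
  Nat.card (Quot (fun t t' : Tn n => DkRel d k t.1 t'.1))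

/-- Directions to a left or right child. -/
inductive Dir : Type
  | L : Dir
  | R : Dir
deriving DecidableEq

/-- The maximal subtree rooted at the node at position `p` (if such a node exists). -/
def subtreeAt : BTree → List Dir → Option BTree
  | t, [] => some t
  | BTree.leaf, _ :: _ => none
  | BTree.node l _, Dir.L :: p => subtreeAt l p
  | BTree.node _ r, Dir.R :: p => subtreeAt r p

/-- Replace the maximal subtree rooted at position `p` by `s` (if the position exists). -/
def replaceAt : BTree → List Dir → BTree → Option BTree
  | _, [], s => some s
  | BTree.leaf, _ :: _, _ => none
  | BTree.node l r, Dir.L :: p, s => (replaceAt l p s).map fun l' => BTree.node l' r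
  | BTree.node l r, Dir.R :: p, s => (replaceAt r p s).map fun r' => BTree.node l r'

/-- `leftAssoc t₀ [t₁,…,t_m] = t₀ ∧ t₁ ∧ ⋯ ∧ t_m` with `∧` performed left to right. -/
def leftAssoc : BTree → List BTree → BTree := List.foldl BTree.node

/-- `t'` is obtained from `t` by a right `k`-rotation at the node at position `p`:
the maximal subtree `t₀ ∧ t₁ ∧ ⋯ ∧ t_{k+1}` rooted there (with `∧` performed left to
right) is replaced by `t₀ ∧ (t₁ ∧ ⋯ ∧ t_{k+1})`.  The left depth of that node is
`p.count Dir.L`. -/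
def IsRightKRot (k : ℕ) (p : List Dir) (t t' : BTree) : Prop :=
  ∃ (t₀ t₁ : BTree) (rest : List BTree), rest.length = k ∧
    subtreeAt t p = some (leftAssoc t₀ (t₁ :: rest)) ∧
    replaceAt t p (BTree.node t₀ (leftAssoc t₁ rest)) = some t'

/-- `IsTopOf s u`: `s` is a subtree of `u` rooted at the root of `u`. -/
def IsTopOf : BTree → BTree → Prop
  | BTree.leaf, _ => True
  | BTree.node l r, BTree.node l' r' => IsTopOf l l' ∧ IsTopOf r r'
  | BTree.node _ _, BTree.leaf => False

/-- `t` contains `s` at left depth `δ`: `t` has a subtree equal to `s` rooted at a node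
of left depth `δ`. -/
def ContainsAt (t s : BTree) (δ : ℕ) : Prop :=
  ∃ (p : List Dir) (u : BTree), subtreeAt t p = some u ∧ p.count Dir.L = δ ∧ IsTopOf s u

/-- `t` avoids `s` at left depth `δ`. -/
def AvoidsAt (t s : BTree) (δ : ℕ) : Prop := ¬ ContainsAt t s δ

/-- `comb_k`: the left-to-right `∧`-product of `k+1` single leaves. -/
def comb (k : ℕ) : BTree := leftAssoc BTree.leaf (List.replicate k BTree.leaf)

/-- `comb_k^1 := t₀ ∧ comb_k` with `t₀` a single leaf. -/
def comb1 (k : ℕ) : BTree := BTree.node BTree.leaf (comb k)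

/-- One left `k`-rotation step, at a node of left depth at least `d-1`, from `t` to `t'`. -/
def LeftRotStep (d k : ℕ) (t t' : BTree) : Prop :=
  ∃ p : List Dir, d - 1 ≤ p.count Dir.L ∧ IsRightKRot k p t' t

/-- The `(d;k)`-order: `s ≤ t` iff `s` is obtained from `t` by finitely many left
`k`-rotations at nodes of left depth at least `d-1`. -/
def dkLE (d k : ℕ) (s t : BTree) : Prop := Relation.ReflTransGen (LeftRotStep d k) t s

/-- `t` is `(d;k)`-minimal. -/
def dkMinimal (d k : ℕ) (t : BTree) : Prop := ∀ s, dkLE d k s t → s = t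

/-- `t` is `(d;k)`-maximal. -/
def dkMaximal (d k : ℕ) (t : BTree) : Prop := ∀ s, dkLE d k t s → s = t

theorem aux_ld_node (l r : BTree) : (BTree.node l r).ld = l.ld.map (· + 1) ++ r.ld := by
  simp [BTree.ld, BTree.leafDepths, Function.comp_def]

theorem aux_zero_mem (t : BTree) : 0 ∈ t.ld := by
  induction t with
  | leaf => simp [BTree.ld, BTree.leafDepths]
  | node l r _ ih => rw [aux_ld_node]; simp [ih]

theorem aux_leftAssoc (rest : List BTree) : ∃ X : List ℕ, ∀ t : BTree,
    (leftAssoc t rest).ld = t.ld.map (· + rest.length) ++ X := by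
  induction rest with
  | nil => exact ⟨[], fun t => by simp [leftAssoc]⟩
  | cons a rest ih =>
    obtain ⟨X, hX⟩ := ih
    refine ⟨a.ld.map (· + rest.length) ++ X, fun t => ?_⟩
    have h := hX (BTree.node t a)
    rw [aux_ld_node] at h
    change (leftAssoc (BTree.node t a) rest).ld = _
    rw [h]
    simp [Function.comp_def, Nat.add_assoc, Nat.add_comm 1]

theorem aux_context (p : List Dir) : ∀ (t t' u s : BTree), subtreeAt t p = some u →
    replaceAt t p s = some t' → ∃ A B : List ℕ,
      t.ld = A ++ (u.ld.map (· + p.count Dir.L) ++ B) ∧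
      t'.ld = A ++ (s.ld.map (· + p.count Dir.L) ++ B) := by
  induction p with
  | nil =>
    intro t t' u s h1 h2
    simp only [subtreeAt, replaceAt, Option.some.injEq] at h1 h2
    subst h1 h2
    exact ⟨[], [], by simp, by simp⟩
  | cons a p ih =>
    intro t t' u s h1 h2
    cases t with
    | leaf => simp [subtreeAt] at h1
    | node l r =>
      cases a with
      | L =>
        simp only [subtreeAt, replaceAt, Option.map_eq_some_iff] at h1 h2
        obtain ⟨l', h2, rfl⟩ := h2
        obtain ⟨A, B, e1, e2⟩ := ih _ _ _ _ h1 h2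
        refine ⟨A.map (· + 1), B.map (· + 1) ++ r.ld, ?_, ?_⟩ <;>
          simp [aux_ld_node, e1, e2, Function.comp_def, Nat.add_assoc]
      | R =>
        simp only [subtreeAt, replaceAt, Option.map_eq_some_iff] at h1 h2
        obtain ⟨l', h2, rfl⟩ := h2
        obtain ⟨A, B, e1, e2⟩ := ih _ _ _ _ h1 h2
        refine ⟨l.ld.map (· + 1) ++ A, B, ?_, ?_⟩ <;>
          simp [aux_ld_node, e1, e2]

theorem aux_forall {R : ℕ → ℕ → Prop} (hR : ∀ a, R a a) (f g : ℕ → ℕ) (A L B : List ℕ) :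
    List.Forall₂ R (A ++ (L.map f ++ B)) (A ++ (L.map g ++ B)) ↔ ∀ x ∈ L, R (f x) (g x) := by
  induction A with
  | nil =>
    induction L with
    | nil => simp [List.forall₂_same, hR]
    | cons x L ih => simpa using fun _ => ih
  | cons a A ih => simpa [hR] using ih

theorem aux_rot {k : ℕ} {p : List Dir} {t t' : BTree} (h : IsRightKRot k p t t') :
    ∃ A L B : List ℕ, 0 ∈ L ∧ t.ld = A ++ (L.map (· + (k + 1 + p.count Dir.L)) ++ B) ∧
      t'.ld = A ++ (L.map (· + (1 + p.count Dir.L)) ++ B) := by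
  obtain ⟨t₀, t₁, rest, hk, h1, h2⟩ := h
  obtain ⟨A, B, e1, e2⟩ := aux_context _ _ _ _ _ h1 h2
  obtain ⟨X, hX⟩ := aux_leftAssoc rest
  have h3 : (leftAssoc t₀ (t₁ :: rest)).ld = _ := hX (BTree.node t₀ t₁)
  rw [h3] at e1
  rw [aux_ld_node, hX] at e2
  rw [aux_ld_node] at e1
  refine ⟨A, t₀.ld, ((t₁.ld.map (· + k) ++ X).map (· + p.count Dir.L)) ++ B,
    aux_zero_mem _, ?_, ?_⟩
  · rw [e1]; simp [hk, Function.comp_def]; intros; omega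
  · rw [e2]; simp [hk, Function.comp_def]; intros; omega

/-- let `d,k ≥ 1` and let `t'` be obtained from `t` by a left or right
`k`-rotation at the node at position `p` (whose left depth is `p.count Dir.L`).  Then
`ld(t) ~_k^d ld(t')` iff the left depth of that node is at least `d-1`. -/
theorem stmt9 (d k : ℕ) (hd : 1 ≤ d) (hk : 1 ≤ k) (t t' : BTree) (p : List Dir)
    (h : IsRightKRot k p t t' ∨ IsRightKRot k p t' t) :
    (ModListEq k t.ld t'.ld ∧ DepthEq d t.ld t'.ld) ↔ d - 1 ≤ p.count Dir.L := by
  have hm : ∀ x, (x + (k + 1 + p.count Dir.L)) % k = (x + (1 + p.count Dir.L)) % k := by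
    intro x
    rw [show x + (k + 1 + p.count Dir.L) = x + (1 + p.count Dir.L) + k by ring,
      Nat.add_mod_right]
  unfold ModListEq DepthEq
  rcases h with h | h
  · obtain ⟨A, L, B, h0, e1, e2⟩ := aux_rot h
    rw [e1, e2, aux_forall (R := fun a b => a % k = b % k) (fun _ => rfl),
      aux_forall (R := fun a b => min a b < d → a = b) (fun _ _ => rfl)]
    constructor
    · rintro ⟨_, h⟩
      have := h 0 h0
      omega
    · intro h
      exact ⟨fun x _ => hm x, fun x _ _ => by omega⟩
  · obtain ⟨A, L, B, h0, e1, e2⟩ := aux_rot h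
    rw [e1, e2, aux_forall (R := fun a b => a % k = b % k) (fun _ => rfl),
      aux_forall (R := fun a b => min a b < d → a = b) (fun _ _ => rfl)]
    constructor
    · rintro ⟨_, h⟩
      have := h 0 h0
      omega
    · intro h
      exact ⟨fun x _ => (hm x).symm, fun x _ _ => by omega⟩
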